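/- arXiv:1311.3354 — 2 statements merged into one kernel-verified Lean document; each statement's English description precedes it below -/
import Mathlib

section
/- Let s, t ∈ ℂ satisfy t³ − 21t + 37 = 0 and s^{18} = 26220t² + 67488t − 376912. In R = ℂ[u,v,x,y] define the 2×2 matrix d¹ = [[a, b], [c, d]] with a = v − ((t² − 10t + 19)/2)·(s·u)⁹ + (t − 2)·y·(s·u)⁵ + y²·(s·u), b = −x + (2t − 5)·(s·u)⁶ + y·(s·u)², c = x² + y³ + (2t − 5)²·(s·u)^{12} + (2t − 5)·x·(s·u)⁶ + 2(2t − 5)·y·(s·u)⁸ + x·y·(s·u)² + y²·(s·u)⁴, d = −v − ((t² − 10t + 19)/2)·(s·u)⁹ + (t − 2)·y·(s·u)⁵ + y²·(s·u). Then det(d¹) = x³ + x·y³ − u^{18} − v². Consequently, with d⁰ the adjugate of d¹, the pair (d⁰, d¹) is a rank-two matrix factorisation of V^{(E₇)}(x,y) − V^{(A_{17})}(u,v) = x³ + x·y³ − u^{18} − v². Moreover, each entry of d¹ is weighted homogeneous for the weights w(u) = 1/9, w(v) = 1, w(x) = 2/3, w(y) = 4/9, the entries having degrees [[1, 2/3],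 [4/3, 1]] respectively. -/
/-!
Write `z = s u`, `p = 2t - 5`, `q = (t² - 10t + 19)/2`, `β = p z⁶ + y z²` and
`A = -q z⁹ + (t - 2) y z⁵ + y² z`. The matrix is then
`[[v + A, -x + β], [x² + xβ + β² + y³, -v + A]]`, so its determinant is
`x³ + x y³ - v² + (A² - β³ - β y³)`. In `A² - β³ - β y³` the coefficients of `y⁴`, `y³` and `y²`
vanish identically in `t`, that of `y` is `-(t³ - 21t + 37) z¹⁴`, and the remaining term is
`(q² - p³) z¹⁸`, which equals `-u¹⁸` because `s¹⁸ (q² - p³) = -1` (`s_pow_mul_eq_neg_one`).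
The two factorisation identities are the general adjugate identities, and homogeneity is checked
monomial by monomial through Mathlib's `IsWeightedHomogeneous`.
-/

open MvPolynomial

noncomputable section

/-- The polynomial ring `R = ℂ[u,v,x,y]`. -/
abbrev R4 : Type := MvPolynomial (Fin 4) ℂ

def u : R4 := X 0
def v : R4 := X 1
def x : R4 := X 2
def y : R4 := X 3

/-- A polynomial is weighted homogeneous of degree `q` for the weights `w`. -/
def WHom (w : Fin 4 → ℚ) (q : ℚ) (p : R4) : Prop :=
  ∀ m ∈ p.support, (∑ i : Fin 4, (m i : ℚ) * w i) = q

/-- The matrix `d¹` of the E₇ orbifold equivalence. -/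
def dE7 (s t : ℂ) : Matrix (Fin 2) (Fin 2) R4 :=
  !![v - C ((t^2 - 10*t + 19)/2) * (C s * u) ^ 9 + C (t - 2) * y * (C s * u) ^ 5
       + y ^ 2 * (C s * u),
     -x + C (2*t - 5) * (C s * u) ^ 6 + y * (C s * u) ^ 2;
     x ^ 2 + y ^ 3 + C ((2*t - 5)^2) * (C s * u) ^ 12 + C (2*t - 5) * x * (C s * u) ^ 6
       + C (2*(2*t - 5)) * y * (C s * u) ^ 8 + x * y * (C s * u) ^ 2 + y ^ 2 * (C s * u) ^ 4,
     -v - C ((t^2 - 10*t + 19)/2) * (C s * u) ^ 9 + C (t - 2) * y * (C s * u) ^ 5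
       + y ^ 2 * (C s * u)]

/-- The given value of `s¹⁸` is the negative inverse of `q² - p³` modulo `t³ - 21t + 37`. -/
theorem s_pow_mul_eq_neg_one (s t : ℂ) (ht : t ^ 3 - 21 * t + 37 = 0)
    (hs : s ^ 18 = 26220 * t ^ 2 + 67488 * t - 376912) :
    s ^ 18 * (((t^2 - 10*t + 19)/2) ^ 2 - (2*t - 5) ^ 3) = -1 := by
  -- First reduce `q² - p³` modulo the cubic, then multiply by the value of `s¹⁸`.
  have h : ((t^2 - 10*t + 19)/2) ^ 2 - (2*t - 5) ^ 3 = (399*t^2 - 2109*t + 2785)/4 := by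
    linear_combination (t/4 - 13) * ht
  rw [h, hs]
  linear_combination (2615445*t - 7092567) * ht

theorem det_dE7 (s t : ℂ) (ht : t ^ 3 - 21 * t + 37 = 0)
    (hs : s ^ 18 = 26220 * t ^ 2 + 67488 * t - 376912) :
    (dE7 s t).det = x ^ 3 + x * y ^ 3 - u ^ 18 - v ^ 2 := by
  have hk := congrArg (C : ℂ → R4) (s_pow_mul_eq_neg_one s t ht hs)
  have hT := congrArg (C : ℂ → R4) ht
  have hq : (2 : R4) * C ((t^2 - 10*t + 19)/2) = C t ^ 2 - 10 * C t + 19 := by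
    have h : 2 * ((t^2 - 10*t + 19)/2) = t^2 - 10*t + 19 := by ring
    have h' := congrArg (C : ℂ → R4) h
    simpa only [map_mul, map_add, map_sub, map_pow, map_ofNat] using h'
  rw [Matrix.det_fin_two]
  simp only [dE7, Matrix.of_apply, Matrix.cons_val', Matrix.cons_val_zero, Matrix.cons_val_one,
    Matrix.cons_val_fin_one]
  -- Treat `q` as an atom, so that no division is left inside `C`.
  generalize (t^2 - 10*t + 19)/2 = q at hk hq ⊢
  simp only [map_sub, map_add, map_mul, map_pow, map_neg, map_one, map_zero, map_ofNat]
    at hk hT hq ⊢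
  -- `hq` enters the coefficients of `y² z¹⁰` and `y z¹⁴`, `hT` that of `y z¹⁴`.
  linear_combination u ^ 18 * hk - y * (C s * u) ^ 14 * hT
    - (y ^ 2 * (C s * u) ^ 10 + y * (C s * u) ^ 14 * (C t - 2)) * hq

/-- Mathlib's `IsWeightedHomogeneous` implies the explicit coordinate formulation `WHom`. -/
theorem WHom.of_isWeightedHomogeneous {w : Fin 4 → ℚ} {q : ℚ} {p : R4}
    (h : IsWeightedHomogeneous w p q) : WHom w q p := by
  intro m hm
  rw [← h (mem_support_iff.mp hm), Finsupp.weight_apply, Finsupp.sum_fintype _ _ (by simp)]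
  simp

/-- A monomial of the shape occurring in `dE7` is homogeneous of the expected degree; `q` is kept
separate from the computed degree so that the comparison is a numerical side goal. -/
theorem isWeightedHomogeneous_term (c s : ℂ) (i j k l : ℕ) {q : ℚ}
    (hq : (i : ℚ) / 9 + j + 2 * k / 3 + 4 * l / 9 = q) :
    IsWeightedHomogeneous (![1/9, 1, 2/3, 4/9] : Fin 4 → ℚ)
      (C c * v ^ j * x ^ k * y ^ l * (C s * u) ^ i : R4) q := by
  have hX := isWeightedHomogeneous_X (R := ℂ) (![1/9, 1, 2/3, 4/9] : Fin 4 → ℚ)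
  have hC := isWeightedHomogeneous_C (R := ℂ) (![1/9, 1, 2/3, 4/9] : Fin 4 → ℚ)
  convert ((((hC c).mul ((hX 1).pow j)).mul ((hX 2).pow k)).mul ((hX 3).pow l)).mul
    (((hC s).mul (hX 0)).pow i) using 1
  · rfl
  · rw [← hq]
    simp
    ring

theorem dE7_WHom (s t : ℂ) (i j : Fin 2) :
    WHom ![1/9, 1, 2/3, 4/9] (!![(1 : ℚ), 2/3; 4/3, 1] i j) (dE7 s t i j) := by
  apply WHom.of_isWeightedHomogeneous
  have H := isWeightedHomogeneous_term
  fin_cases i <;> fin_cases j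
  · change IsWeightedHomogeneous _ (dE7 s t 0 0) (1 : ℚ)
    convert (((H 1 s 0 1 0 0 (q := 1) (by norm_num)).add
      (H (-((t^2 - 10*t + 19)/2)) s 9 0 0 0 (by norm_num))).add
      (H (t - 2) s 5 0 0 1 (by norm_num))).add (H 1 s 1 0 0 2 (by norm_num)) using 1
    simp only [dE7, map_neg, map_one]
    simp
    ring
  · change IsWeightedHomogeneous _ (dE7 s t 0 1) (2/3 : ℚ)
    convert ((H (-1) s 0 0 1 0 (q := 2/3) (by norm_num)).add
      (H (2*t - 5) s 6 0 0 0 (by norm_num))).add (H 1 s 2 0 0 1 (by norm_num)) using 1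
    simp only [dE7, map_neg, map_one]
    simp
  · change IsWeightedHomogeneous _ (dE7 s t 1 0) (4/3 : ℚ)
    convert ((((((H 1 s 0 0 2 0 (q := 4/3) (by norm_num)).add
      (H 1 s 0 0 0 3 (by norm_num))).add
      (H ((2*t - 5)^2) s 12 0 0 0 (by norm_num))).add
      (H (2*t - 5) s 6 0 1 0 (by norm_num))).add
      (H (2*(2*t - 5)) s 8 0 0 1 (by norm_num))).add
      (H 1 s 2 0 1 1 (by norm_num))).add (H 1 s 4 0 0 2 (by norm_num)) using 1
    simp only [dE7, map_one]
    simp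
  · change IsWeightedHomogeneous _ (dE7 s t 1 1) (1 : ℚ)
    convert (((H (-1) s 0 1 0 0 (q := 1) (by norm_num)).add
      (H (-((t^2 - 10*t + 19)/2)) s 9 0 0 0 (by norm_num))).add
      (H (t - 2) s 5 0 0 1 (by norm_num))).add (H 1 s 1 0 0 2 (by norm_num)) using 1
    simp only [dE7, map_neg, map_one]
    simp
    ring

theorem stmt4 (s t : ℂ) (ht : t ^ 3 - 21 * t + 37 = 0)
    (hs : s ^ 18 = 26220 * t ^ 2 + 67488 * t - 376912) :
    (dE7 s t).det = x ^ 3 + x * y ^ 3 - u ^ 18 - v ^ 2 ∧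
    dE7 s t * (dE7 s t).adjugate
      = (x ^ 3 + x * y ^ 3 - u ^ 18 - v ^ 2) • (1 : Matrix (Fin 2) (Fin 2) R4) ∧
    (dE7 s t).adjugate * dE7 s t
      = (x ^ 3 + x * y ^ 3 - u ^ 18 - v ^ 2) • (1 : Matrix (Fin 2) (Fin 2) R4) ∧
    ∀ i j, WHom ![1/9, 1, 2/3, 4/9] (!![(1 : ℚ), 2/3; 4/3, 1] i j) (dE7 s t i j) := by
  have hdet := det_dE7 s t ht hs
  refine ⟨hdet, ?_, ?_, dE7_WHom s t⟩
  · rw [Matrix.mul_adjugate, hdet]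
  · rw [Matrix.adjugate_mul, hdet]
end
end

section
/- Let t ∈ ℂ be any root of t³ − 21t + 37 = 0. Then 2t² + 5t − 30 ≠ 0 and 26220t² + 67488t − 376912 ≠ 0. Moreover, for any s ∈ ℂ with s^{18} = 26220t² + 67488t − 376912 (so s ≠ 0), let d¹ be the 2×2 matrix over R = ℂ[u,v,x,y] with entries a = v − ((t² − 10t + 19)/2)·(s·u)⁹ + (t − 2)·y·(s·u)⁵ + y²·(s·u), b = −x + (2t − 5)·(s·u)⁶ + y·(s·u)², c = x² + y³ + (2t − 5)²·(s·u)^{12} + (2t − 5)·x·(s·u)⁶ + 2(2t − 5)·y·(s·u)⁸ + x·y·(s·u)² + y²·(s·u)⁴, d = −v − ((t² − 10t + 19)/2)·(s·u)⁹ + (t − 2)·y·(s·u)⁵ + y²·(s·u); let d⁰ = adjugate(d¹), d = [[0, d¹], [d⁰, 0]], and S = str(∂_u d · ∂_v d · ∂_x d · ∂_y d) ∈ R. Then for all natural numbers c', e', the coefficient of the monomial u^{16} v⁰ x^{c'} y^{e'} in S equals −36(2t² + 5t − 30)/s if c' = e' = 0 and 0 otherwise. Equivalently, the right quantum dimension of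 this matrix factorisation of x³ + x·y³ − u^{18} − v² equals (2t² + 5t − 30)/s, which is non-zero. -/
/-!
Write `p = -(t² - 10t + 19)/2`, `q = 2t - 5`, `r = t - 2`. Expanding the supertrace gives an
explicit polynomial with eight terms (`SE7_expand`), which is homogeneous of degree `16` for the weights
`|u| = 1`, `|x| = 6`, `|y| = 4` and does not involve `v`. Hence `u¹⁶` occurs in it only with
`x⁰ y⁰`, and there its coefficient is `2 s¹⁷ (18 q² r - 27 p q)`. Multiplying by `s` and substituting
`s¹⁸ = 26220 t² + 67488 t - 376912` turns the claimed value into an identity modulo `t³ - 21 t + 37`.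
The non-vanishing claims hold because both quadratics in `t` are units modulo the cubic.
-/

open MvPolynomial

noncomputable section

/-- The exponent vector of the monomial `u^a v^b x^c y^e`. -/
def mon (a b c e : ℕ) : Fin 4 →₀ ℕ :=
  Finsupp.single 0 a + Finsupp.single 1 b + Finsupp.single 2 c + Finsupp.single 3 e

/-- Entrywise partial derivative of a matrix of polynomials. -/
def pd {m n : Type} (i : Fin 4) (M : Matrix m n R4) : Matrix m n R4 :=
  M.map fun p => pderiv i p

/-- The supertrace of a `2r × 2r` block matrix. -/
def str {r : ℕ} (M : Matrix (Fin r ⊕ Fin r) (Fin r ⊕ Fin r) R4) : R4 :=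
  Matrix.trace M.toBlocks₁₁ - Matrix.trace M.toBlocks₂₂

/-- The twisted differential `d = [[0, d¹], [d⁰, 0]]` with `d⁰` the adjugate of `d¹`. -/
def DE7 (s t : ℂ) : Matrix (Fin 2 ⊕ Fin 2) (Fin 2 ⊕ Fin 2) R4 :=
  Matrix.fromBlocks 0 (dE7 s t) (dE7 s t).adjugate 0

/-- The supertrace `S = str(∂_u d · ∂_v d · ∂_x d · ∂_y d)`. -/
def SE7 (s t : ℂ) : R4 :=
  str (pd 0 (DE7 s t) * pd 1 (DE7 s t) * pd 2 (DE7 s t) * pd 3 (DE7 s t))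

/-- The supertrace in terms of the entries of `d¹ = [[a, b], [c, d]]`: only the cyclic products
surviving `∂_v d¹ = diag(1, -1)` and `∂_x d¹ = [[0, -1], [∂_x c, 0]]` remain. -/
lemma SE7_eq_entries (s t : ℂ) (a b c d : R4) (h : dE7 s t = !![a, b; c, d])
    (hav : pderiv 1 a = 1) (hbv : pderiv 1 b = 0) (hcv : pderiv 1 c = 0) (hdv : pderiv 1 d = -1)
    (hax : pderiv 2 a = 0) (hbx : pderiv 2 b = -1) (hdx : pderiv 2 d = 0) :
    SE7 s t = (pderiv 0 b * pderiv 2 c * pderiv 3 d - pderiv 0 a * pderiv 3 c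
        - pderiv 0 d * pderiv 2 c * pderiv 3 b + pderiv 0 c * pderiv 3 a)
      - (-(pderiv 0 b * pderiv 2 c * pderiv 3 a) + pderiv 0 d * pderiv 3 c
        + pderiv 0 a * pderiv 2 c * pderiv 3 b - pderiv 0 c * pderiv 3 d) := by
  simp [SE7, str, pd, DE7, h, Matrix.fromBlocks_map, Matrix.adjugate_fin_two_of,
    Matrix.fromBlocks_multiply, Matrix.trace_fin_two, Matrix.mul_apply, Fin.sum_univ_two,
    hav, hbv, hcv, hdv, hax, hbx, hdx]
  ring

/-- The expanded supertrace; every term has weight `16` for `|u| = 1`, `|x| = 6`, `|y| = 4`. -/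
lemma SE7_expand (s t p q r : ℂ) (hp : p = -((t ^ 2 - 10 * t + 19) / 2)) (hq : q = 2 * t - 5)
    (hr : r = t - 2) :
    SE7 s t = monomial (mon 16 0 0 0) (2 * s ^ 17 * (18 * q ^ 2 * r - 27 * p * q))
      + monomial (mon 12 0 0 1) (2 * s ^ 13 * (36 * q ^ 2 + 9 * q * r - 27 * p))
      + monomial (mon 10 0 1 0) (2 * s ^ 11 * (18 * q * r - 27 * p))
      + monomial (mon 8 0 0 2) (2 * s ^ 9 * (45 * q - 9 * r - 27 * p))
      + monomial (mon 6 0 1 1) (2 * s ^ 7 * (36 * q - 9 * r))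
      + monomial (mon 4 0 0 3) (2 * s ^ 5 * (9 - 15 * r))
      + monomial (mon 2 0 1 2) (2 * s ^ 3 * 9)
      + monomial (mon 0 0 0 4) (2 * s * (-3)) := by
  have hmon (a b c e : ℕ) (k : ℂ) : monomial (mon a b c e) k
      = C k * (X 0 ^ a * X 1 ^ b * X 2 ^ c * X 3 ^ e : R4) := by
    simp only [mon, X_pow_eq_monomial, monomial_mul, C_mul_monomial, mul_one]
  have hp' : (t ^ 2 - 10 * t + 19) / 2 = -p := by rw [hp]; ring
  have hd : dE7 s t = !![X 1 + C p * (C s * X 0) ^ 9 + C r * X 3 * (C s * X 0) ^ 5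
        + X 3 ^ 2 * (C s * X 0),
      -X 2 + C q * (C s * X 0) ^ 6 + X 3 * (C s * X 0) ^ 2;
      X 2 ^ 2 + X 3 ^ 3 + C q ^ 2 * (C s * X 0) ^ 12 + C q * X 2 * (C s * X 0) ^ 6
        + 2 * C q * X 3 * (C s * X 0) ^ 8 + X 2 * X 3 * (C s * X 0) ^ 2
        + X 3 ^ 2 * (C s * X 0) ^ 4,
      -X 1 + C p * (C s * X 0) ^ 9 + C r * X 3 * (C s * X 0) ^ 5 + X 3 ^ 2 * (C s * X 0)] := by
    have h2 : (C 2 : R4) = 2 := map_ofNat C 2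
    simp only [dE7, u, v, x, y, hp', ← hq, ← hr, C_neg, C_mul, C_pow, h2, neg_mul, sub_neg_eq_add]
  have two : ∀ i : Fin 4, pderiv i (2 : R4) = 0 := fun i => by
    rw [← map_ofNat C 2]; exact pderiv_C
  rw [SE7_eq_entries s t _ _ _ _ hd]
  · simp only [hmon, map_add, map_sub, map_neg, map_mul, map_pow, map_ofNat, Derivation.leibniz,
      Derivation.leibniz_pow, pderiv_C, pderiv_X, two, smul_eq_mul, nsmul_eq_mul]
    simp
    ring
  all_goals simp [pderiv_X, two]

lemma mon_inj {a b c e a' b' c' e' : ℕ} :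
    mon a b c e = mon a' b' c' e' ↔ a = a' ∧ b = b' ∧ c = c' ∧ e = e' := by
  simp [mon, Finsupp.ext_iff, Fin.forall_fin_succ, Finsupp.single_apply]

theorem stmt5 (t : ℂ) (ht : t ^ 3 - 21 * t + 37 = 0) :
    2 * t ^ 2 + 5 * t - 30 ≠ 0 ∧
    26220 * t ^ 2 + 67488 * t - 376912 ≠ 0 ∧
    ∀ s : ℂ, s ^ 18 = 26220 * t ^ 2 + 67488 * t - 376912 →
      s ≠ 0 ∧
      (∀ c' e' : ℕ, coeff (mon 16 0 c' e') (SE7 s t)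
          = if c' = 0 ∧ e' = 0 then -36 * (2 * t ^ 2 + 5 * t - 30) / s else 0) ∧
      -(1/36 : ℂ) * coeff (mon 16 0 0 0) (SE7 s t) = (2 * t ^ 2 + 5 * t - 30) / s ∧
      (2 * t ^ 2 + 5 * t - 30) / s ≠ 0 := by
  -- Bézout certificates: the cofactor of `h` is the inverse of the quadratic modulo the cubic.
  have h1 : 2 * t ^ 2 + 5 * t - 30 ≠ 0 := by
    intro h
    exact one_ne_zero (α := ℂ) (by
      linear_combination (11 / 3 - 2 / 3 * t - 1 / 3 * t ^ 2) * h - (-3 - 2 / 3 * t) * ht)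
  have h2 : 26220 * t ^ 2 + 67488 * t - 376912 ≠ 0 := by
    intro h
    exact one_ne_zero (α := ℂ) (by
      linear_combination (-2785 / 4 + 2109 / 4 * t - 399 / 4 * t ^ 2) * h
        - (7092567 - 2615445 * t) * ht)
  refine ⟨h1, h2, fun s hs => ?_⟩
  have hs0 : s ≠ 0 := by
    rintro rfl
    exact h2 (by rw [← hs]; norm_num)
  have hc : ∀ c' e' : ℕ, coeff (mon 16 0 c' e') (SE7 s t)
      = if c' = 0 ∧ e' = 0 then -36 * (2 * t ^ 2 + 5 * t - 30) / s else 0 := by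
    intro c' e'
    rw [SE7_expand s t _ _ _ rfl rfl rfl]
    simp only [coeff_add, coeff_monomial, mon_inj]
    by_cases h : c' = 0 ∧ e' = 0
    · obtain ⟨rfl, rfl⟩ := h
      norm_num
      rw [eq_div_iff hs0]
      -- The cofactor of `hs` is `2 (18 q² r - 27 p q)` as a polynomial in `t`.
      linear_combination (-4365 + 4716 * t - 1683 * t ^ 2 + 198 * t ^ 3) * hs
        + (44465400 - 30765636 * t + 5191560 * t ^ 2) * ht
    · have h' : ¬ (0 = c' ∧ 0 = e') := fun k => h ⟨k.1.symm, k.2.symm⟩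
      simp [h, h']
  refine ⟨hs0, hc, ?_, div_ne_zero h1 hs0⟩
  rw [hc 0 0, if_pos ⟨rfl, rfl⟩]
  ring
end
end
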